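/- Let 1 ≤ q < p < ∞, let μ, ν be positive measures on (X, 𝒯) with 0 < μ(I) < ∞ and ν(I) < ∞ for all I ∈ 𝓛, and let α = {α_I : I ∈ 𝓛} be nonnegative constants. The vector-valued inequality ∫_X (Σ_{I ∈ 𝓛} |α_I · E_I^μ f|^q)^{p/q} dν ≤ C^p ∫_X |f|^p dμ for all f ∈ L^p(μ) holds with some finite C if and only if the scalar inequality ∫_X |Σ_{I ∈ 𝓛} α_I^q · E_I^μ h|^{p/q} dν ≤ C'^{p/q} ∫_X |h|^{p/q} dμ for all h ∈ L^{p/q}(μ) holds with some finite C'; moreover C^q and C' are comparable with constants depending only on p and q. -/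

import Mathlib

open MeasureTheory ENNReal NNReal Set Filter

/-- A lattice of measurable sets on a measurable space `X`: a union of countable
generations, each generation being a countable disjoint cover of `X`, and each set of
generation `n` being a (countable) disjoint union of sets of generation `n+1`. -/
structure LatticeFamily (X : Type*) [MeasurableSpace X] where
  gen : ℤ → Set (Set X)
  countable : ∀ n, (gen n).Countable
  meas : ∀ n, ∀ I ∈ gen n, MeasurableSet I
  pairwiseDisjoint : ∀ n, (gen n).PairwiseDisjoint id
  cover : ∀ n, ⋃₀ gen n = univ
  subdiv : ∀ n, ∀ I ∈ gen n, ∃ S ⊆ gen (n + 1), I = ⋃₀ S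

/-- The collection of all sets of the lattice. -/
def LatticeFamily.sets {X : Type*} [MeasurableSpace X] (L : LatticeFamily X) : Set (Set X) :=
  ⋃ n, L.gen n

/-- The averaging operator `E_I^μ f = (μ(I)⁻¹ ∫_I f dμ) · 1_I`. -/
noncomputable def avgOp {X : Type*} [MeasurableSpace X] (μ : Measure X) (I : Set X)
    (f : X → ℝ≥0∞) : X → ℝ≥0∞ :=
  I.indicator fun _ => (∫⁻ y in I, f y ∂μ) / μ I

/-- The lattice maximal function `M_μ f(x) = sup {E_I^μ f(x) : I ∈ 𝓛, x ∈ I}`. -/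
noncomputable def maxOp {X : Type*} [MeasurableSpace X] (L : LatticeFamily X) (μ : Measure X)
    (f : X → ℝ≥0∞) : X → ℝ≥0∞ := fun x =>
  ⨆ (I : Set X) (_ : I ∈ L.sets ∧ x ∈ I), (∫⁻ y in I, f y ∂μ) / μ I

theorem vvs_nested {X : Type*} [MeasurableSpace X] (L : LatticeFamily X) (n : ℤ) (k : ℕ) :
    ∀ I ∈ L.gen n, ∀ J ∈ L.gen (n + k), J ⊆ I ∨ Disjoint I J := by
  induction k with
  | zero =>
    intro I hI J hJ
    simp only [Nat.cast_zero, add_zero] at hJ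
    by_cases h : I = J
    · left; rw [h]
    · right; exact L.pairwiseDisjoint n hI hJ h
  | succ k ih =>
    intro I hI J hJ
    by_cases hne : (I ∩ J).Nonempty
    · left
      obtain ⟨x, hxI, hxJ⟩ := hne
      have hx : x ∈ ⋃₀ L.gen (n + k) := by rw [L.cover]; trivial
      obtain ⟨P, hP, hxP⟩ := hx
      have hPI : P ⊆ I := by
        rcases ih I hI P hP with h | h
        · exact h
        · exact absurd hxP (Set.disjoint_left.1 h hxI)
      obtain ⟨S, hS, rfl⟩ := L.subdiv _ P hP
      obtain ⟨J', hJ', hxJ'⟩ := hxP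
      have hJ2 : J ∈ L.gen (n + k + 1) := by
        have : n + ((k + 1 : ℕ) : ℤ) = n + k + 1 := by push_cast; ring
        rwa [this] at hJ
      have : J' = J := by
        by_contra hne
        exact Set.disjoint_left.1 (L.pairwiseDisjoint _ (hS hJ') hJ2 hne) hxJ' hxJ
      subst this
      exact (Set.subset_sUnion_of_mem hJ').trans hPI
    · right
      exact Set.disjoint_iff_inter_eq_empty.2 (Set.not_nonempty_iff_eq_empty.1 hne)

theorem vvs_nested_sets {X : Type*} [MeasurableSpace X] (L : LatticeFamily X)
    {I J : Set X} (hI : I ∈ L.sets) (hJ : J ∈ L.sets) : J ⊆ I ∨ I ⊆ J ∨ Disjoint I J := by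
  obtain ⟨n, hn⟩ := Set.mem_iUnion.1 hI
  obtain ⟨m, hm⟩ := Set.mem_iUnion.1 hJ
  rcases le_total n m with h | h
  · obtain ⟨k, rfl⟩ := Int.le.dest h
    rcases vvs_nested L n k I hn J hm with h | h
    · exact Or.inl h
    · exact Or.inr (Or.inr h)
  · obtain ⟨k, rfl⟩ := Int.le.dest h
    rcases vvs_nested L m k J hm I hn with h | h
    · exact Or.inr (Or.inl h)
    · exact Or.inr (Or.inr h.symm)

theorem vvs_sets_countable {X : Type*} [MeasurableSpace X] (L : LatticeFamily X) :
    L.sets.Countable := Set.countable_iUnion L.countable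

theorem vvs_sets_meas {X : Type*} [MeasurableSpace X] (L : LatticeFamily X) {I : Set X}
    (hI : I ∈ L.sets) : MeasurableSet I := by
  obtain ⟨n, hn⟩ := Set.mem_iUnion.1 hI
  exact L.meas n I hn

theorem vvs_weak_fin {X : Type*} [MeasurableSpace X] (L : LatticeFamily X) (μ : Measure X)
    (g : X → ℝ≥0∞) (a : ℝ≥0∞) (G : Finset (Set X)) (hG : ∀ I ∈ G, I ∈ L.sets)
    (ha : ∀ I ∈ G, a * μ I ≤ ∫⁻ x in I, g x ∂μ) :
    a * μ (⋃ I ∈ G, I) ≤ ∫⁻ x, g x ∂μ := by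
  classical
  set G' : Finset (Set X) := G.filter (fun I => Maximal (· ∈ G) I) with hG'
  have hU : (⋃ I ∈ G, I) ⊆ ⋃ I ∈ G', I := by
    intro x hx
    simp only [Set.mem_iUnion] at hx ⊢
    obtain ⟨I, hI, hx⟩ := hx
    obtain ⟨J, hIJ, hJ⟩ := G.exists_le_maximal hI
    exact ⟨J, by simp [hG', hJ, hJ.prop], hIJ hx⟩
  have hsub : ∀ I ∈ G', I ∈ G := fun I hI => (Finset.mem_filter.1 hI).1
  have hdisj : (G' : Set (Set X)).PairwiseDisjoint id := by
    intro I hI J hJ hne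
    have hI' := (Finset.mem_filter.1 hI)
    have hJ' := (Finset.mem_filter.1 hJ)
    rcases vvs_nested_sets L (hG I hI'.1) (hG J hJ'.1) with h | h | h
    · exact absurd (hJ'.2.eq_of_le hI'.1 h).symm hne
    · exact absurd (hI'.2.eq_of_le hJ'.1 h) hne
    · exact h
  calc a * μ (⋃ I ∈ G, I) ≤ a * μ (⋃ I ∈ G', I) := by gcongr
    _ ≤ a * ∑ I ∈ G', μ I := by gcongr; exact measure_biUnion_finset_le _ _
    _ = ∑ I ∈ G', a * μ I := Finset.mul_sum _ _ _
    _ ≤ ∑ I ∈ G', ∫⁻ x in I, g x ∂μ := Finset.sum_le_sum fun I hI => ha I (hsub I hI)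
    _ = ∫⁻ x in ⋃ I ∈ G', I, g x ∂μ :=
        (lintegral_biUnion_finset hdisj (fun I hI => vvs_sets_meas L (hG I (hsub I hI))) g).symm
    _ ≤ _ := setLIntegral_le_lintegral _ _

theorem vvs_weak {X : Type*} [MeasurableSpace X] (L : LatticeFamily X) (μ : Measure X)
    (g : X → ℝ≥0∞) (a : ℝ≥0∞) (F : Set (Set X)) (hF : F ⊆ L.sets)
    (ha : ∀ I ∈ F, a * μ I ≤ ∫⁻ x in I, g x ∂μ) :
    a * μ (⋃ I ∈ F, I) ≤ ∫⁻ x, g x ∂μ := by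
  classical
  have hc : Countable F := ((vvs_sets_countable L).mono hF).to_subtype
  have hU : (⋃ I ∈ F, I) = ⋃ G : Finset F, ⋃ I ∈ G.image Subtype.val, I := by
    ext x
    simp only [Set.mem_iUnion]
    constructor
    · rintro ⟨I, hI, hx⟩
      exact ⟨{⟨I, hI⟩}, I, by simp, hx⟩
    · rintro ⟨G, I, hI, hx⟩
      obtain ⟨J, _, rfl⟩ := Finset.mem_image.1 hI
      exact ⟨J.1, J.2, hx⟩
  have hd : Directed (· ⊆ ·) (fun G : Finset F => ⋃ I ∈ G.image Subtype.val, I) := by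
    apply Monotone.directed_le
    intro G H hGH
    exact Set.biUnion_subset_biUnion_left (fun I hI => Finset.image_subset_image hGH hI)
  rw [hU, hd.measure_iUnion, ENNReal.mul_iSup]
  apply iSup_le
  intro G
  apply vvs_weak_fin L
  · intro I hI
    obtain ⟨J, _, rfl⟩ := Finset.mem_image.1 hI
    exact hF J.2
  · intro I hI
    obtain ⟨J, _, rfl⟩ := Finset.mem_image.1 hI
    exact ha _ J.2

/-- The maximal function, indexed by the subtype of lattice sets. -/
noncomputable def vvsMax {X : Type*} [MeasurableSpace X] (L : LatticeFamily X) (μ : Measure X)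
    (h : X → ℝ≥0∞) : X → ℝ≥0∞ := fun x => ⨆ I : L.sets, avgOp μ I.1 h x

theorem vvs_avg_meas {X : Type*} [MeasurableSpace X] (L : LatticeFamily X) (μ : Measure X)
    (h : X → ℝ≥0∞) (I : L.sets) : Measurable (avgOp μ I.1 h) :=
  measurable_const.indicator (vvs_sets_meas L I.2)

theorem vvsMax_meas {X : Type*} [MeasurableSpace X] (L : LatticeFamily X) (μ : Measure X)
    (h : X → ℝ≥0∞) : Measurable (vvsMax L μ h) := by
  have : Countable L.sets := (vvs_sets_countable L).to_subtype
  exact Measurable.iSup fun I => vvs_avg_meas L μ h I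

theorem vvs_weak_max {X : Type*} [MeasurableSpace X] (L : LatticeFamily X) (μ : Measure X)
    (hμ : ∀ I ∈ L.sets, 0 < μ I ∧ μ I < ∞) (h : X → ℝ≥0∞) (hh : Measurable h) (a : ℝ≥0∞)
    (ha : a ≠ ∞) :
    a * μ {x | 2 * a < vvsMax L μ h x} ≤ ∫⁻ x, {x | a < h x}.indicator h x ∂μ := by
  have hset : {x | 2 * a < vvsMax L μ h x} ⊆
      ⋃ I ∈ {I | I ∈ L.sets ∧ 2 * a < (∫⁻ y in I, h y ∂μ) / μ I}, I := by
    intro x hx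
    obtain ⟨I, hI⟩ := lt_iSup_iff.1 (show 2 * a < vvsMax L μ h x from hx)
    by_cases hxI : x ∈ I.1
    · simp only [avgOp, Set.indicator_of_mem hxI] at hI
      exact Set.mem_biUnion (show I.1 ∈ _ from ⟨I.2, hI⟩) hxI
    · simp [avgOp, Set.indicator_of_notMem hxI] at hI
  refine le_trans (mul_le_mul_right (measure_mono hset) a)
    (vvs_weak L μ _ a _ (fun I hI => (show I ∈ L.sets ∧ _ from hI).1) ?_)
  rintro I ⟨hI, hlt⟩
  obtain ⟨h0, h1⟩ := hμ I hI
  have h2 : 2 * a * μ I ≤ ∫⁻ y in I, h y ∂μ :=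
    (ENNReal.le_div_iff_mul_le (Or.inl h0.ne') (Or.inl h1.ne)).1 hlt.le
  have h3 : ∫⁻ y in I, h y ∂μ ≤ ∫⁻ y in I, {x | a < h x}.indicator h y ∂μ + a * μ I := by
    calc ∫⁻ y in I, h y ∂μ ≤ ∫⁻ y in I, ({x | a < h x}.indicator h y + a) ∂μ := by
          apply lintegral_mono
          intro y
          by_cases hy : a < h y
          · simp [Set.indicator, hy]
          · simp [Set.indicator, hy, not_lt.1 hy]
      _ = _ := by
          rw [lintegral_add_right _ measurable_const]; simp
  have h4 : a * μ I + a * μ I ≤ ∫⁻ y in I, {x | a < h x}.indicator h y ∂μ + a * μ I := by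
    refine le_trans (le_of_eq ?_) (h2.trans h3)
    ring
  exact (ENNReal.add_le_add_iff_right (ENNReal.mul_ne_top ha h1.ne)).1 h4

theorem vvs_lower (r : ℝ) (hr : 1 < r) (y : ℝ≥0∞) :
    y ^ r ≤ ∑' k : ℤ, if (2 : ℝ≥0∞) ^ k < y then ((2 : ℝ≥0∞) ^ (k + 1)) ^ r else 0 := by
  have hr0 : 0 < r := by linarith
  rcases eq_or_ne y 0 with rfl | hy0
  · simp [hr0]
  rcases eq_or_ne y ∞ with rfl | hyt
  · have hk : ∀ n : ℕ, (n : ℝ≥0∞) ≤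
        ∑' k : ℤ, if (2 : ℝ≥0∞) ^ k < ∞ then ((2 : ℝ≥0∞) ^ (k + 1)) ^ r else 0 := by
      intro n
      refine le_trans ?_ (ENNReal.le_tsum (n : ℤ))
      have h1 : (1 : ℝ≥0∞) ≤ 2 ^ ((n : ℤ) + 1) := by
        have : ((n : ℤ) + 1) = ((n + 1 : ℕ) : ℤ) := by push_cast; ring
        rw [this, zpow_natCast]
        exact one_le_pow₀ (by norm_num)
      have h2 : (n : ℝ≥0∞) ≤ 2 ^ ((n : ℤ) + 1) := by
        have : ((n : ℤ) + 1) = ((n + 1 : ℕ) : ℤ) := by push_cast; ring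
        rw [this, zpow_natCast]
        have : n ≤ 2 ^ (n + 1) := (Nat.lt_two_pow_self (n := n)).le.trans
          (Nat.pow_le_pow_right (by norm_num) (by omega))
        exact_mod_cast this
      have hlt : (2 : ℝ≥0∞) ^ (n : ℤ) < ∞ := by
        rw [zpow_natCast]; exact ENNReal.pow_lt_top (by norm_num)
      rw [if_pos hlt]
      calc (n : ℝ≥0∞) ≤ 2 ^ ((n : ℤ) + 1) := h2
        _ = (2 ^ ((n : ℤ) + 1)) ^ (1 : ℝ) := (ENNReal.rpow_one _).symm
        _ ≤ _ := ENNReal.rpow_le_rpow_of_exponent_le h1 hr.le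
    rw [ENNReal.eq_top_of_forall_nnreal_le (x := tsum _)]
    · exact le_top
    · intro z
      obtain ⟨n, hn⟩ := exists_nat_ge z
      exact le_trans (by exact_mod_cast hn) (hk n)
  · obtain ⟨k, hk1, hk2⟩ := ENNReal.exists_mem_Ioc_zpow hy0 hyt
      (show (1 : ℝ≥0∞) < 2 by norm_num) (by norm_num)
    refine le_trans ?_ (ENNReal.le_tsum k)
    rw [if_pos hk1]
    exact ENNReal.rpow_le_rpow hk2 hr0.le

/-- The constant in the geometric sum bound. -/
noncomputable def vvsK (s : ℝ) : ℝ≥0∞ := (2 : ℝ≥0∞) ^ s * (1 - (2 : ℝ≥0∞) ^ (-s))⁻¹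

theorem vvsK_lt_top (s : ℝ) (hs : 0 < s) : vvsK s < ∞ := by
  unfold vvsK
  apply ENNReal.mul_lt_top (ENNReal.rpow_lt_top_of_nonneg hs.le (by norm_num))
  rw [ENNReal.inv_lt_top, tsub_pos_iff_lt]
  exact ENNReal.rpow_lt_one_of_one_lt_of_neg (by norm_num) (by linarith)

theorem vvs_upper (s : ℝ) (hs : 0 < s) (y : ℝ≥0∞) :
    (∑' k : ℤ, if (2 : ℝ≥0∞) ^ k < y then ((2 : ℝ≥0∞) ^ (k + 1)) ^ s else 0)
      ≤ vvsK s * y ^ s := by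
  rcases eq_or_ne y 0 with rfl | hy0
  · simp
  rcases eq_or_ne y ∞ with rfl | hyt
  · rw [ENNReal.top_rpow_of_pos hs, ENNReal.mul_top]
    · exact le_top
    · unfold vvsK
      apply mul_ne_zero
      · exact (ENNReal.rpow_pos (by norm_num) (by norm_num)).ne'
      · rw [ENNReal.inv_ne_zero]
        exact ENNReal.sub_ne_top (by norm_num)
  · obtain ⟨m, hm1, hm2⟩ := ENNReal.exists_mem_Ioc_zpow hy0 hyt
      (show (1 : ℝ≥0∞) < 2 by norm_num) (by norm_num)
    have hinj : Function.Injective (fun j : ℕ => m - (j : ℤ)) := by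
      intro a b hab
      simpa using hab
    rw [← hinj.tsum_eq]
    · calc (∑' j : ℕ, if (2 : ℝ≥0∞) ^ (m - (j : ℤ)) < y then
              ((2 : ℝ≥0∞) ^ (m - (j : ℤ) + 1)) ^ s else 0)
          ≤ ∑' j : ℕ, ((2 : ℝ≥0∞) ^ (m + 1)) ^ s * ((2 : ℝ≥0∞) ^ (-s)) ^ j := by
            apply ENNReal.tsum_le_tsum
            intro j
            split_ifs
            · apply le_of_eq
              rw [← ENNReal.rpow_intCast, ← ENNReal.rpow_intCast, ← ENNReal.rpow_mul,
                ← ENNReal.rpow_mul, ← ENNReal.rpow_mul_natCast, ← ENNReal.rpow_add _ _ (by norm_num) (by norm_num)]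
              congr 1
              push_cast
              ring
            · exact zero_le
        _ = ((2 : ℝ≥0∞) ^ (m + 1)) ^ s * (1 - (2 : ℝ≥0∞) ^ (-s))⁻¹ := by
            rw [ENNReal.tsum_mul_left, ENNReal.tsum_geometric]
        _ = vvsK s * ((2 : ℝ≥0∞) ^ m) ^ s := by
            rw [ENNReal.zpow_add (by norm_num) (by norm_num), zpow_one,
              ENNReal.mul_rpow_of_nonneg _ _ hs.le]
            unfold vvsK
            ring
        _ ≤ vvsK s * y ^ s := by gcongr
    · intro k hk
      simp only [Function.mem_support, ne_eq, ite_eq_right_iff, not_forall] at hk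
      obtain ⟨hk, -⟩ := hk
      have h1 : (2 : ℝ≥0∞) ^ k < 2 ^ (m + 1) := hk.trans_le hm2
      have h2 : k < m + 1 := by
        by_contra hcon
        exact absurd h1 (not_lt.2 (ENNReal.zpow_le_of_le (by norm_num) (not_lt.1 hcon)))
      exact ⟨(m - k).toNat, by simp; omega⟩

theorem vvs_maximal {X : Type*} [MeasurableSpace X] (L : LatticeFamily X) (μ : Measure X)
    (hμ : ∀ I ∈ L.sets, 0 < μ I ∧ μ I < ∞) (r : ℝ) (hr : 1 < r) (h : X → ℝ≥0∞)
    (hh : Measurable h) :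
    ∫⁻ x, vvsMax L μ h x ^ r ∂μ ≤ (2 ^ r * 2 * vvsK (r - 1)) * ∫⁻ x, h x ^ r ∂μ := by
  have hr0 : 0 < r := by linarith
  have hM := vvsMax_meas L μ h
  have hms : ∀ k : ℤ, MeasurableSet {x | (2 : ℝ≥0∞) ^ k < h x} :=
    fun k => measurableSet_lt measurable_const hh
  have hmsM : ∀ k : ℤ, MeasurableSet {x | (2 : ℝ≥0∞) ^ k < vvsMax L μ h x} :=
    fun k => measurableSet_lt measurable_const hM
  have htwo : ∀ k : ℤ, (2 : ℝ≥0∞) ^ (k + 1) = 2 * 2 ^ k := by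
    intro k
    rw [ENNReal.zpow_add (by norm_num) (by norm_num), zpow_one, mul_comm]
  have h0 : ∀ k : ℤ, (2 : ℝ≥0∞) ^ k ≠ 0 := fun k => (ENNReal.zpow_pos (by norm_num) (by norm_num) k).ne'
  have ht : ∀ k : ℤ, (2 : ℝ≥0∞) ^ k ≠ ∞ := fun k => (ENNReal.zpow_lt_top (by norm_num) (by norm_num) k).ne
  calc ∫⁻ x, vvsMax L μ h x ^ r ∂μ
      ≤ ∫⁻ x, ∑' k : ℤ, {x | (2 : ℝ≥0∞) ^ k < vvsMax L μ h x}.indicator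
          (fun _ => ((2 : ℝ≥0∞) ^ (k + 1)) ^ r) x ∂μ := by
        apply lintegral_mono
        intro x
        simpa [Set.indicator] using vvs_lower r hr (vvsMax L μ h x)
    _ = ∑' k : ℤ, ((2 : ℝ≥0∞) ^ (k + 1)) ^ r * μ {x | (2 : ℝ≥0∞) ^ k < vvsMax L μ h x} := by
        rw [lintegral_tsum fun k => (measurable_const.indicator (hmsM k)).aemeasurable]
        congr 1
        ext k
        rw [lintegral_indicator_const (hmsM k)]
    _ = ∑' k : ℤ, ((2 : ℝ≥0∞) ^ (k + 1 + 1)) ^ r *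
          μ {x | (2 : ℝ≥0∞) ^ (k + 1) < vvsMax L μ h x} :=
        ((Equiv.addRight (1 : ℤ)).tsum_eq (fun k : ℤ => ((2 : ℝ≥0∞) ^ (k + 1)) ^ r *
          μ {x | (2 : ℝ≥0∞) ^ k < vvsMax L μ h x})).symm
    _ ≤ ∑' k : ℤ, ∫⁻ x, (2 ^ r * 2) * (h x * {x | (2 : ℝ≥0∞) ^ k < h x}.indicator
          (fun _ => ((2 : ℝ≥0∞) ^ (k + 1)) ^ (r - 1)) x) ∂μ := by
        apply ENNReal.tsum_le_tsum
        intro k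
        have hw := vvs_weak_max L μ hμ h hh (2 ^ k) (ht k)
        rw [← htwo] at hw
        have e1 : ((2 : ℝ≥0∞) ^ (k + 1 + 1)) ^ r =
            (2 ^ r * 2) * ((2 : ℝ≥0∞) ^ (k + 1)) ^ (r - 1) * 2 ^ k := by
          rw [htwo (k + 1), ENNReal.mul_rpow_of_nonneg _ _ hr0.le]
          have : ((2 : ℝ≥0∞) ^ (k + 1)) ^ r =
              ((2 : ℝ≥0∞) ^ (k + 1)) ^ (r - 1) * (2 ^ (k + 1)) := by
            conv_rhs => rw [← ENNReal.rpow_one ((2 : ℝ≥0∞) ^ (k + 1)), ← ENNReal.rpow_mul,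
              one_mul, ← ENNReal.rpow_add _ _ (h0 _) (ht _)]
            congr 1; ring
          rw [this]
          generalize ((2 : ℝ≥0∞) ^ (k + 1)) ^ (r - 1) = z
          rw [htwo k]
          ring
        rw [e1, mul_assoc]
        calc _ ≤ (2 ^ r * 2) * ((2 : ℝ≥0∞) ^ (k + 1)) ^ (r - 1) *
              ∫⁻ x, {x | (2 : ℝ≥0∞) ^ k < h x}.indicator h x ∂μ := by gcongr
          _ = ∫⁻ x, (2 ^ r * 2) * ((2 : ℝ≥0∞) ^ (k + 1)) ^ (r - 1) *
               {x | (2 : ℝ≥0∞) ^ k < h x}.indicator h x ∂μ :=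
              (lintegral_const_mul _ (hh.indicator (hms k))).symm
          _ ≤ _ := by
              apply lintegral_mono
              intro x
              by_cases hx : (2 : ℝ≥0∞) ^ k < h x
              · simp only [Set.indicator, Set.mem_ofPred_eq, hx, if_true]
                apply le_of_eq; ring
              · simp [Set.indicator, hx]
    _ = ∫⁻ x, ∑' k : ℤ, (2 ^ r * 2) * (h x * {x | (2 : ℝ≥0∞) ^ k < h x}.indicator
          (fun _ => ((2 : ℝ≥0∞) ^ (k + 1)) ^ (r - 1)) x) ∂μ := by
        rw [lintegral_tsum]
        intro k
        exact ((hh.mul (measurable_const.indicator (hms k))).const_mul _).aemeasurable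
    _ ≤ ∫⁻ x, (2 ^ r * 2 * vvsK (r - 1)) * h x ^ r ∂μ := by
        apply lintegral_mono
        intro x
        simp only
        rw [ENNReal.tsum_mul_left, ENNReal.tsum_mul_left]
        have hu := vvs_upper (r - 1) (by linarith) (h x)
        calc _ ≤ 2 ^ r * 2 * (h x * (vvsK (r - 1) * h x ^ (r - 1))) := by
              gcongr
              simpa [Set.indicator] using hu
          _ = (2 ^ r * 2 * vvsK (r - 1)) * (h x ^ (1 : ℝ) * h x ^ (r - 1)) := by
              rw [ENNReal.rpow_one]; ring
          _ = _ := by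
              rw [← ENNReal.rpow_add_of_nonneg _ _ (by norm_num) (by linarith)]
              congr 2; ring
    _ = _ := lintegral_const_mul _ (hh.pow_const r)

theorem vvs_jensen {X : Type*} [MeasurableSpace X] (μ : Measure X) (I : Set X)
    (h0 : 0 < μ I) (h1 : μ I < ∞) (q : ℝ) (hq : 1 ≤ q) (f : X → ℝ≥0∞) (hf : Measurable f) :
    ((∫⁻ y in I, f y ∂μ) / μ I) ^ q ≤ (∫⁻ y in I, f y ^ q ∂μ) / μ I := by
  have hq0 : 0 < q := by linarith
  have : IsProbabilityMeasure ((μ I)⁻¹ • μ.restrict I) :=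
    ⟨by simp [ENNReal.inv_mul_cancel h0.ne' h1.ne]⟩
  have key := eLpNorm'_le_eLpNorm'_of_exponent_le (one_pos) hq ((μ I)⁻¹ • μ.restrict I)
    (f := f) hf.aestronglyMeasurable
  simp only [eLpNorm', enorm_eq_self, lintegral_smul_measure, ENNReal.rpow_one, div_one,
    smul_eq_mul] at key
  rw [one_div, ENNReal.le_rpow_inv_iff hq0] at key
  rw [ENNReal.div_eq_inv_mul, ENNReal.div_eq_inv_mul]
  exact key

/-- For `1 ≤ q < p < ∞`, the vector-valued inequality with constant `C`
holds iff the scalar inequality (for the operator `h ↦ ∑_I α_I^q E_I^μ h` from `L^{p/q}(μ)`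
to `L^{p/q}(ν)`) holds with constant `C'`, with `C^q` and `C'` comparable up to constants
depending only on `p, q`. -/
theorem vector_valued_iff_scalar (p q : ℝ) (hq : 1 ≤ q) (hqp : q < p) :
    ∃ c : ℝ≥0∞, 0 < c ∧ c < ∞ ∧
      ∀ (X : Type) [MeasurableSpace X] (L : LatticeFamily X) (μ ν : Measure X),
        (∀ I ∈ L.sets, 0 < μ I ∧ μ I < ∞) → (∀ I ∈ L.sets, ν I < ∞) →
        ∀ α : Set X → ℝ≥0,
        (∀ C : ℝ≥0∞, C < ∞ →
          (∀ f : X → ℝ≥0∞, Measurable f →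
            ∫⁻ x, (∑' I : L.sets, ((α I.1 : ℝ≥0∞) * avgOp μ I.1 f x) ^ q) ^ (p / q) ∂ν
              ≤ C ^ p * ∫⁻ x, f x ^ p ∂μ) →
          ∀ h : X → ℝ≥0∞, Measurable h →
            ∫⁻ x, (∑' I : L.sets, (α I.1 : ℝ≥0∞) ^ q * avgOp μ I.1 h x) ^ (p / q) ∂ν
              ≤ (c * C ^ q) ^ (p / q) * ∫⁻ x, h x ^ (p / q) ∂μ) ∧
        (∀ C' : ℝ≥0∞, C' < ∞ →
          (∀ h : X → ℝ≥0∞, Measurable h →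
            ∫⁻ x, (∑' I : L.sets, (α I.1 : ℝ≥0∞) ^ q * avgOp μ I.1 h x) ^ (p / q) ∂ν
              ≤ C' ^ (p / q) * ∫⁻ x, h x ^ (p / q) ∂μ) →
          ∀ f : X → ℝ≥0∞, Measurable f →
            ∫⁻ x, (∑' I : L.sets, ((α I.1 : ℝ≥0∞) * avgOp μ I.1 f x) ^ q) ^ (p / q) ∂ν
              ≤ ((c * C') ^ (1 / q)) ^ p * ∫⁻ x, f x ^ p ∂μ) := by
  have hq0 : 0 < q := by linarith
  have hp0 : 0 < p := by linarith
  have hr : 1 < p / q := (one_lt_div hq0).2 hqp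
  have hr0 : 0 < p / q := by linarith
  have hK : (2 : ℝ≥0∞) ^ (p / q) * 2 * vvsK (p / q - 1) < ∞ :=
    ENNReal.mul_lt_top (ENNReal.mul_lt_top (ENNReal.rpow_lt_top_of_nonneg hr0.le (by norm_num))
      (by norm_num)) (vvsK_lt_top _ (by linarith))
  set K : ℝ≥0∞ := (2 : ℝ≥0∞) ^ (p / q) * 2 * vvsK (p / q - 1) with hKdef
  set c : ℝ≥0∞ := (1 + K) ^ (p / q)⁻¹ with hc
  have hc1 : 1 ≤ c := ENNReal.one_le_rpow (by simp) (by positivity)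
  have hcr : c ^ (p / q) = 1 + K := by
    rw [hc, ← ENNReal.rpow_mul, inv_mul_cancel₀ hr0.ne', ENNReal.rpow_one]
  refine ⟨c, lt_of_lt_of_le one_pos hc1,
    ENNReal.rpow_lt_top_of_nonneg (by positivity)
      (ENNReal.add_lt_top.2 ⟨ENNReal.one_lt_top, hK⟩).ne, ?_⟩
  intro X _ L μ ν hμ hν α
  refine ⟨?_, ?_⟩
  · intro C _ hC h hh
    have hM := vvsMax_meas L μ h
    have h1 := hC (fun x => vvsMax L μ h x ^ (1 / q)) (hM.pow_const _)
    calc _ ≤ ∫⁻ x, (∑' I : L.sets, ((α I.1 : ℝ≥0∞) *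
            avgOp μ I.1 (fun x => vvsMax L μ h x ^ (1 / q)) x) ^ q) ^ (p / q) ∂ν := by
          apply lintegral_mono
          intro x
          refine ENNReal.rpow_le_rpow (ENNReal.tsum_le_tsum fun I => ?_) hr0.le
          rw [ENNReal.mul_rpow_of_nonneg _ _ hq0.le]
          gcongr
          by_cases hx : x ∈ I.1
          · obtain ⟨h0, ht⟩ := hμ I.1 I.2
            rw [← ENNReal.rpow_inv_le_iff hq0, ← one_div]
            simp only [avgOp, Set.indicator_of_mem hx]
            rw [ENNReal.le_div_iff_mul_le (Or.inl h0.ne') (Or.inl ht.ne)]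
            rw [← setLIntegral_const]
            apply setLIntegral_mono' (vvs_sets_meas L I.2)
            intro y hy
            refine ENNReal.rpow_le_rpow ?_ (by positivity)
            refine le_trans ?_ (le_iSup (fun J : L.sets => avgOp μ J.1 h y) I)
            simp [avgOp, Set.indicator_of_mem hy]
          · simp [avgOp, Set.indicator_of_notMem hx]
      _ ≤ C ^ p * ∫⁻ x, (vvsMax L μ h x ^ (1 / q)) ^ p ∂μ := h1
      _ = C ^ p * ∫⁻ x, vvsMax L μ h x ^ (p / q) ∂μ := by
          congr 2
          ext x
          rw [← ENNReal.rpow_mul]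
          congr 1; ring
      _ ≤ C ^ p * (K * ∫⁻ x, h x ^ (p / q) ∂μ) := by
          gcongr
          exact vvs_maximal L μ hμ _ hr h hh
      _ ≤ C ^ p * ((1 + K) * ∫⁻ x, h x ^ (p / q) ∂μ) := by
          gcongr
          exact le_add_self
      _ = _ := by
          rw [ENNReal.mul_rpow_of_nonneg _ _ hr0.le, hcr, ← ENNReal.rpow_mul,
            mul_div_cancel₀ _ hq0.ne']
          ring
  · intro C' _ hC f hf
    have h1 := hC (fun x => f x ^ q) (hf.pow_const _)
    calc _ ≤ ∫⁻ x, (∑' I : L.sets, (α I.1 : ℝ≥0∞) ^ q *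
            avgOp μ I.1 (fun x => f x ^ q) x) ^ (p / q) ∂ν := by
          apply lintegral_mono
          intro x
          refine ENNReal.rpow_le_rpow (ENNReal.tsum_le_tsum fun I => ?_) hr0.le
          rw [ENNReal.mul_rpow_of_nonneg _ _ hq0.le]
          gcongr
          by_cases hx : x ∈ I.1
          · obtain ⟨h0, ht⟩ := hμ I.1 I.2
            simp only [avgOp, Set.indicator_of_mem hx]
            exact vvs_jensen μ I.1 h0 ht q hq f hf
          · simp [avgOp, Set.indicator_of_notMem hx, hq0]
      _ ≤ _ := h1
      _ = C' ^ (p / q) * ∫⁻ x, f x ^ p ∂μ := by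
          congr 2
          ext x
          rw [← ENNReal.rpow_mul, mul_div_cancel₀ _ hq0.ne']
      _ ≤ _ := by
          gcongr
          rw [← ENNReal.rpow_mul, one_div_mul_eq_div]
          refine ENNReal.rpow_le_rpow ?_ hr0.le
          exact le_mul_of_one_le_left zero_le hc1
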